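/- For a finite solvable group G the following statements are equivalent: (1) G is an SST-group; (2) every subgroup of G is either SS-permutable or abnormal in G; (3) every subgroup of G is either NSS-permutable or abnormal in G. -/

import Mathlib

open scoped Pointwise

section Defs

variable {G : Type*} [Group G]

/-- `K` is an SS-permutable supplement of `H` in `G`: `HK = G` and `H` permutes with
every Sylow subgroup of `K`. -/
def IsSSSupplement (H K : Subgroup G) : Prop :=
  (H : Set G) * (K : Set G) = Set.univ ∧
    ∀ (p : ℕ) [Fact p.Prime] (P : Sylow p K),
      (H : Set G) * ((P.toSubgroup.map K.subtype : Subgroup G) : Set G) =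
        ((P.toSubgroup.map K.subtype : Subgroup G) : Set G) * (H : Set G)

/-- `H` is SS-permutable in `G`: `H` has a supplement `K` such that `H` permutes with
every Sylow subgroup of `K`. -/
def IsSSPermutable (H : Subgroup G) : Prop :=
  ∃ K : Subgroup G, IsSSSupplement H K

/-- `H` is NSS-permutable in `G`: `H` has a normal supplement `K` such that `H` permutes
with every Sylow subgroup of `K`. -/
def IsNSSPermutable (H : Subgroup G) : Prop :=
  ∃ K : Subgroup G, K.Normal ∧ IsSSSupplement H K

/-- `H` is S-permutable in `G`: it permutes with every Sylow subgroup of `G`. -/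
def IsSPermutable (H : Subgroup G) : Prop :=
  ∀ (p : ℕ) [Fact p.Prime] (P : Sylow p G),
    (H : Set G) * ((P : Subgroup G) : Set G) = ((P : Subgroup G) : Set G) * (H : Set G)

/-- `H` is semipermutable in `G`: `HX = XH` for every subgroup `X` with `gcd(|H|,|X|) = 1`. -/
def IsSemipermutable (H : Subgroup G) : Prop :=
  ∀ X : Subgroup G, Nat.Coprime (Nat.card H) (Nat.card X) →
    (H : Set G) * (X : Set G) = (X : Set G) * (H : Set G)

/-- `H` is S-semipermutable in `G`: `HQ = QH` for every Sylow `q`-subgroup `Q` of `G`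
with `q` a prime not dividing `|H|`. -/
def IsSSemipermutable (H : Subgroup G) : Prop :=
  ∀ (q : ℕ) [Fact q.Prime], ¬ q ∣ Nat.card H → ∀ Q : Sylow q G,
    (H : Set G) * ((Q : Subgroup G) : Set G) = ((Q : Subgroup G) : Set G) * (H : Set G)

end Defs

/-- `G` is an SST-group: SS-permutability is a transitive relation. -/
def IsSSTGroup (G : Type*) [Group G] : Prop :=
  ∀ H K : Subgroup G, H ≤ K → IsSSPermutable (H.subgroupOf K) → IsSSPermutable K →
    IsSSPermutable H

/-- `G` is an NSST-group: NSS-permutability is a transitive relation. -/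
def IsNSSTGroup (G : Type*) [Group G] : Prop :=
  ∀ H K : Subgroup G, H ≤ K → IsNSSPermutable (H.subgroupOf K) → IsNSSPermutable K →
    IsNSSPermutable H

/-- `G` is a PST-group: S-permutability is a transitive relation. -/
def IsPSTGroup (G : Type*) [Group G] : Prop :=
  ∀ H K : Subgroup G, H ≤ K → IsSPermutable (H.subgroupOf K) → IsSPermutable K →
    IsSPermutable H

/-- `G` is a BT-group: semipermutability is a transitive relation. -/
def IsBTGroup (G : Type*) [Group G] : Prop :=
  ∀ H K : Subgroup G, H ≤ K → IsSemipermutable (H.subgroupOf K) → IsSemipermutable K →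
    IsSemipermutable H

/-- `H` is abnormal in `G`: `g ∈ ⟨H, H^g⟩` for every `g ∈ G`. -/
def IsAbnormal {G : Type*} [Group G] (H : Subgroup G) : Prop :=
  ∀ g : G, g ∈ H ⊔ H.map (MulAut.conj g).toMonoidHom

/-!
Every subgroup of `G` being SS-permutable or abnormal is a condition that passes to subgroups and
quotients and makes each `p`-subgroup permute with each Sylow `q`-subgroup, `q ≠ p`. By induction on
the order, such a `G` has for every prime `p` a normal subgroup `M p` of index `1` or `p` with a
normal Sylow `p`-subgroup. The critical configuration is `O_p(G) = 1` with a normal `p'`-subgroup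
`V` of index `p ^ 2`; there every element `x` of order `p` in a Sylow subgroup `P` has a partner `y`
with `P = ⟨x⟩ × ⟨y⟩` and `V = C_V(x) C_V(y)`, and comparing the partners of `x` and of `x y` shows
that `P` is not faithful on `V`; the elements of `P` acting trivially on `V` are central in `G`, so
`O_p(G) ≠ 1` after all.

For a subgroup `H`, the intersection of those `M p` that do not contain `H` is a normal supplement
of `H` whose Sylow `p`-subgroups are Sylow in `G` if `H ≤ M p` and normal in `G` otherwise; both
kinds permute with `H`, so every subgroup is NSS-permutable. Conversely, the maximal subgroups of a
solvable group are SS-permutable, hence all subgroups of a solvable SST-group are, by descent along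
a maximal chain.
-/

open Subgroup
open scoped commutatorElement

section Permutes

variable {G : Type*} [Group G] {H K : Subgroup G}

/-- Two subgroups permute if their setwise product `HK` equals `KH`. The equation is the one
occurring in `IsSSSupplement`, to which it unfolds. -/
def Permutes (H K : Subgroup G) : Prop :=
  (H : Set G) * (K : Set G) = (K : Set G) * (H : Set G)

namespace Permutes

theorem symm (h : Permutes H K) : Permutes K H :=
  Eq.symm h

theorem exists_mul_eq (hHK : Permutes H K) {h k : G} (hh : h ∈ H) (hk : k ∈ K) :
    ∃ k' ∈ K, ∃ h' ∈ H, k' * h' = h * k :=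
  Set.mem_mul.1 (hHK.subset (Set.mul_mem_mul hh hk))

theorem of_forall_exists (hHK : ∀ h ∈ H, ∀ k ∈ K, ∃ k' ∈ K, ∃ h' ∈ H, k' * h' = h * k) :
    Permutes H K := by
  have hsub : (H : Set G) * K ⊆ (K : Set G) * H := by
    rintro _ ⟨h, hh, k, hk, rfl⟩
    exact Set.mem_mul.2 (hHK h hh k hk)
  refine hsub.antisymm ?_
  simpa only [mul_inv_rev, inv_coe_set] using Set.inv_subset_inv.2 hsub

theorem of_normal (H K : Subgroup G) [K.Normal] : Permutes H K :=
  set_mul_normal_comm _ _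

theorem of_le (h : H ≤ K) : Permutes H K :=
  of_forall_exists fun x hx k hk => ⟨x * k, mul_mem (h hx) hk, 1, one_mem _, mul_one _⟩

theorem map {G' : Type*} [Group G'] (h : Permutes H K) (f : G →* G') :
    Permutes (H.map f) (K.map f) := by
  unfold Permutes at *
  simp only [coe_map, ← Set.image_mul, h]

theorem iSup_left {ι : Sort*} {H : ι → Subgroup G} (h : ∀ i, Permutes (H i) K) :
    Permutes (⨆ i, H i) K := by
  refine of_forall_exists fun x hx => ?_
  induction hx using Subgroup.iSup_induction' with
  | hp i x hx =>
    intro k hk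
    obtain ⟨k', hk', x', hx', e⟩ := (h i).exists_mul_eq hx hk
    exact ⟨k', hk', x', mem_iSup_of_mem i hx', e⟩
  | h1 => exact fun k hk => ⟨k, hk, 1, one_mem _, by simp⟩
  | hmul x y _ _ hx hy =>
    intro k hk
    obtain ⟨k', hk', y', hy', e⟩ := hy k hk
    obtain ⟨k'', hk'', x', hx', e'⟩ := hx k' hk'
    refine ⟨k'', hk'', x' * y', mul_mem hx' hy', ?_⟩
    rw [← mul_assoc, e', mul_assoc, e, mul_assoc]

theorem coe_sup (h : Permutes H K) : ((H ⊔ K : Subgroup G) : Set G) = (H : Set G) * K := by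
  have hmul : (H : Set G) * K * ((H : Set G) * K) = (H : Set G) * K :=
    calc (H : Set G) * K * ((H : Set G) * K)
        = (H : Set G) * ((K : Set G) * H) * K := by simp only [mul_assoc]
      _ = (H : Set G) * H * ((K : Set G) * K) := by rw [← h]; simp only [mul_assoc]
      _ = (H : Set G) * K := by rw [coe_mul_coe, coe_mul_coe]
  have hinv : ((H : Set G) * K)⁻¹ = (H : Set G) * K := by
    rw [mul_inv_rev, inv_coe_set, inv_coe_set, h]
  let S : Subgroup G :=
    { carrier := (H : Set G) * K
      mul_mem' := fun ha hb => hmul.subset (Set.mul_mem_mul ha hb)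
      one_mem' := ⟨1, one_mem H, 1, one_mem K, mul_one 1⟩
      inv_mem' := fun ha => hinv.subset (Set.inv_mem_inv.2 ha) }
  refine Set.Subset.antisymm (show H ⊔ K ≤ S from sup_le ?_ ?_) ?_
  · exact fun x hx => ⟨x, hx, 1, one_mem K, mul_one x⟩
  · exact fun x hx => ⟨1, one_mem H, x, hx, one_mul x⟩
  · rintro _ ⟨x, hx, y, hy, rfl⟩
    exact mul_mem_sup hx hy

theorem le_normalizer_of_le_normal {A : Subgroup G} [hA : A.Normal] (h : Permutes H K)
    (hHA : H ≤ A) (hKA : Disjoint K A) : K ≤ normalizer (H : Set G) := by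
  refine le_normalizer_iff.2 fun g hg z hz => ?_
  obtain ⟨z', hz', g', hg', e⟩ := h.symm.exists_mul_eq hg hz
  have hmem : g' * g⁻¹ ∈ A := by
    have := mul_mem (inv_mem (hHA hz')) (hA.conj_mem z (hHA hz) g)
    rwa [← e, mul_assoc, inv_mul_cancel_left] at this
  have hgg : g' * g⁻¹ = 1 := disjoint_def.1 hKA (mul_mem hg' (inv_mem hg)) hmem
  rwa [← e, mul_assoc, hgg, mul_one]

end Permutes

theorem index_eq_relIndex_of_mul_eq_univ (h : (H : Set G) * (K : Set G) = Set.univ) :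
    K.index = K.relIndex H := by
  have htrans : MulAction.IsPretransitive H (G ⧸ K) := by
    refine (MulAction.isPretransitive_iff_base ((1 : G) : G ⧸ K)).2 fun y => ?_
    obtain ⟨g, rfl⟩ := QuotientGroup.mk_surjective y
    obtain ⟨a, ha, b, hb, rfl⟩ := Set.mem_mul.1 (h ▸ Set.mem_univ g)
    refine ⟨⟨a, ha⟩, ?_⟩
    change ((a * 1 : G) : G ⧸ K) = _
    rw [QuotientGroup.eq]
    simpa using hb
  have hstab : MulAction.stabilizer H ((1 : G) : G ⧸ K) = K.subgroupOf H := by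
    ext x
    rw [MulAction.mem_stabilizer_iff, mem_subgroupOf]
    change ((x * 1 : G) : G ⧸ K) = _ ↔ _
    rw [QuotientGroup.eq]
    simp
  rw [relIndex, ← hstab, MulAction.index_stabilizer_of_transitive, index_eq_card]

theorem Permutes.relIndex_sup (h : Permutes H K) : K.relIndex (H ⊔ K) = K.relIndex H := by
  rw [← relIndex_subgroupOf (le_sup_left : H ≤ H ⊔ K)]
  refine index_eq_relIndex_of_mul_eq_univ (Set.eq_univ_of_forall fun x : ↥(H ⊔ K) => ?_)
  obtain ⟨y, hy, z, hz, e⟩ := h.coe_sup.subset x.2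
  exact ⟨⟨y, mem_sup_left hy⟩, hy, ⟨z, mem_sup_right hz⟩, hz, Subtype.ext e⟩

theorem Permutes.isPGroup_sup [Finite G] {p : ℕ} [Fact p.Prime] (h : Permutes H K)
    (hH : IsPGroup p H) (hK : IsPGroup p K) : IsPGroup p (H ⊔ K : Subgroup G) := by
  obtain ⟨m, hm⟩ := hH.index (K.subgroupOf H)
  obtain ⟨n, hn⟩ := IsPGroup.iff_card.1 hK
  refine IsPGroup.of_card (n := n + m) ?_
  rw [← relIndex_bot_left, ← relIndex_mul_relIndex ⊥ K _ bot_le le_sup_right, relIndex_bot_left,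
    h.relIndex_sup, relIndex, hm, hn, pow_add]

end Permutes

section PGroup

variable {G : Type*} [Group G] {p : ℕ}

/-- The `p`-core `O_p(G)`, the largest normal `p`-subgroup of `G`. -/
def pCore (p : ℕ) (G : Type*) [Group G] : Subgroup G :=
  ⨅ P : Sylow p G, (P : Subgroup G)

theorem pCore_le_sylow (P : Sylow p G) : pCore p G ≤ P :=
  iInf_le _ P

theorem isPGroup_pCore : IsPGroup p (pCore p G) :=
  (default : Sylow p G).isPGroup'.to_le (pCore_le_sylow default)

instance pCore_characteristic : (pCore p G).Characteristic := by
  refine characteristic_iff_le_comap.2 fun φ x hx => mem_iInf.2 fun P => ?_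
  have hmem : x ∈ (φ⁻¹ : MulAut G) • (P : Subgroup G) := pCore_le_sylow ((φ⁻¹ : MulAut G) • P) hx
  rwa [mem_pointwise_smul_iff_inv_smul_mem, inv_inv] at hmem

theorem le_pCore {N : Subgroup G} [N.Normal] (hN : IsPGroup p N) : N ≤ pCore p G :=
  le_iInf hN.le_sylow_of_normal

theorem pCore_eq_bot_of_normal (h : pCore p G = ⊥) (M : Subgroup G) [M.Normal] :
    pCore p M = ⊥ := by
  have hnormal : ((pCore p M).map M.subtype).Normal := ConjAct.normal_of_characteristic_of_normal
  have hle := le_pCore (isPGroup_pCore.map M.subtype : IsPGroup p ((pCore p M).map M.subtype))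
  rwa [h, le_bot_iff, map_eq_bot_iff_of_injective _ M.subtype_injective] at hle

theorem eq_top_of_forall_prime_not_dvd_index {H : Subgroup G}
    (h : ∀ p : ℕ, p.Prime → ¬ p ∣ H.index) : H = ⊤ := by
  by_contra hne
  obtain ⟨p, hp, hdvd⟩ := Nat.exists_prime_and_dvd (mt index_eq_one.1 hne)
  exact h p hp hdvd

theorem characteristic_of_coprime_card_index {N : Subgroup G} [N.Normal]
    (h : (Nat.card N).Coprime N.index) : N.Characteristic := by
  refine characteristic_iff_map_le.2 fun φ => relIndex_eq_one.1 (Nat.eq_one_of_dvd_coprimes h ?_ ?_)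
  · rw [← card_map_of_injective (f := φ.toMonoidHom) φ.injective]
    exact relIndex_dvd_card _ _
  · exact relIndex_dvd_index_of_normal _ _

variable [Finite G]

theorem not_dvd_index_of_sylow_le [Fact p.Prime] {H : Subgroup G} (P : Sylow p G)
    (hPH : (P : Subgroup G) ≤ H) : ¬ p ∣ H.index :=
  fun hdvd => P.not_dvd_index (hdvd.trans (index_dvd_of_le hPH))

theorem le_of_isPGroup_of_not_dvd_relIndex [Fact p.Prime] {O M X : Subgroup G} [O.Normal]
    (hX : IsPGroup p X) (hXM : X ≤ M) (h : ¬ p ∣ O.relIndex M) : X ≤ O := by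
  have hdvd : O.relIndex X ∣ O.relIndex M := by
    rw [← relIndex_subgroupOf hXM]
    exact relIndex_dvd_index_of_normal _ _
  obtain ⟨k, hk⟩ := hX.index (O.subgroupOf X)
  have hcop : (O.relIndex X).Coprime (O.relIndex M) := by
    rw [relIndex, hk]
    exact .pow_left k (((Fact.out : p.Prime).coprime_iff_not_dvd).2 h)
  exact relIndex_eq_one.1 (Nat.eq_one_of_dvd_coprimes hcop dvd_rfl hdvd)

theorem sylow_normal_of_le_normalizer [Fact p.Prime] (P : Sylow p G) {L : Subgroup G} [L.Normal]
    (hPL : (P : Subgroup G) ≤ L) (hL : L ≤ normalizer (P : Set G)) : (P : Subgroup G).Normal := by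
  rw [← normalizer_eq_top_iff, ← P.normalizer_sup_eq_top' hPL]
  exact (sup_of_le_left hL).symm

theorem iSup_sylow_eq_top :
    ⨆ q : Nat.Primes, ((default : Sylow q G) : Subgroup G) = ⊤ :=
  eq_top_of_forall_prime_not_dvd_index fun p hp =>
    have : Fact p.Prime := ⟨hp⟩
    not_dvd_index_of_sylow_le default
      (le_iSup (fun q : Nat.Primes => ((default : Sylow q G) : Subgroup G)) ⟨p, hp⟩)

end PGroup

section SSPermutable

variable {G : Type*} [Group G] {H K : Subgroup G}

theorem IsSSSupplement.permutes_conj_smul (h : IsSSSupplement H K) {p : ℕ} [Fact p.Prime]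
    (P : Sylow p K) (g : G) : Permutes H (MulAut.conj g • P.toSubgroup.map K.subtype) := by
  obtain ⟨a, ha, b, hb, rfl⟩ := Set.mem_mul.1 (h.1 ▸ Set.mem_univ g)
  have hperm : Permutes H (((⟨b, hb⟩ : K) • P : Sylow p K).toSubgroup.map K.subtype) := h.2 p _
  have hconj : ((⟨b, hb⟩ : K) • P : Sylow p K).toSubgroup.map K.subtype =
      MulAut.conj b • P.toSubgroup.map K.subtype := by
    change (P.toSubgroup.map (MulAut.conj ⟨b, hb⟩).toMonoidHom).map K.subtype =
      (P.toSubgroup.map K.subtype).map (MulAut.conj b).toMonoidHom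
    rw [map_map, map_map]
    rfl
  rw [map_mul, mul_smul, ← hconj, ← conj_smul_eq_self_of_mem ha]
  exact hperm.map (MulAut.conj a).toMonoidHom

theorem IsSSSupplement.of_map_subtype {M : Subgroup G} {H : Subgroup M}
    (h : IsSSSupplement (H.map M.subtype) K) : IsSSSupplement H (K.subgroupOf M) := by
  refine ⟨Set.eq_univ_of_forall fun x => ?_, fun p _ X => Permutes.of_forall_exists ?_⟩
  · obtain ⟨_, ⟨a, ha, rfl⟩, b, hb, e⟩ := Set.mem_mul.1 (h.1 ▸ Set.mem_univ (x : G))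
    have hbM : b = (a⁻¹ * x : M) := eq_inv_mul_of_mul_eq e
    exact Set.mem_mul.2 ⟨a, ha, a⁻¹ * x, mem_subgroupOf.2 (hbM ▸ hb), mul_inv_cancel_left a x⟩
  · let f : K.subgroupOf M →* K := M.subtype.subgroupComap K
    have hf : Function.Injective f := fun x y hxy =>
      Subtype.ext (Subtype.ext (congrArg (fun z : K => (z : G)) hxy))
    obtain ⟨Y, hY⟩ := X.exists_comap_eq_of_injective hf
    rintro a ha _ ⟨x, hx, rfl⟩
    obtain ⟨_, ⟨y, hy, rfl⟩, _, ⟨b, hb, rfl⟩, e⟩ := Permutes.exists_mul_eq (h.2 p Y)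
      (mem_map_of_mem M.subtype ha) (mem_map_of_mem K.subtype (hY.ge hx))
    have hyM : (y : G) = (a * x * b⁻¹ : M) := eq_mul_inv_of_mul_eq e
    refine ⟨a * x * b⁻¹, ⟨⟨a * x * b⁻¹, mem_subgroupOf.2 (hyM ▸ y.2)⟩, hY.le ?_, rfl⟩, b, hb,
      inv_mul_cancel_right _ b⟩
    rwa [mem_comap, show f _ = y from Subtype.ext hyM.symm]

theorem IsSSSupplement.map [Finite G] {G' : Type*} [Group G'] {f : G →* G'}
    (hf : Function.Surjective f) (h : IsSSSupplement H K) :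
    IsSSSupplement (H.map f) (K.map f) := by
  refine ⟨?_, fun p _ X => ?_⟩
  · rw [coe_map, coe_map, ← Set.image_mul, h.1, Set.image_univ_of_surjective hf]
  · obtain ⟨Y, rfl⟩ := Sylow.mapSurjective_surjective (f.subgroupMap_surjective K) p X
    convert Permutes.map (h.2 p Y) f using 1
    rw [Sylow.coe_mapSurjective, map_map, map_map, Permutes]
    rfl

theorem IsNSSPermutable.isSSPermutable (h : IsNSSPermutable H) : IsSSPermutable H :=
  let ⟨K, _, hK⟩ := h
  ⟨K, hK⟩

theorem IsSSPermutable.exists_sup_eq_sylow [Finite G] (h : IsSSPermutable H) {p : ℕ}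
    [Fact p.Prime] (P : Sylow p G) (hHP : H ≤ P) :
    ∃ X : Subgroup G, H ⊔ X = P ∧ ∀ g : G, Permutes H (MulAut.conj g • X) := by
  obtain ⟨K, hK⟩ := h
  have hPK : IsPGroup p ((P : Subgroup G).subgroupOf K) := P.isPGroup'.comap_subtype
  obtain ⟨X, hX⟩ := hPK.exists_le_sylow
  have hperm : Permutes H (X.toSubgroup.map K.subtype) := hK.2 p X
  have hpgroup := hperm.isPGroup_sup (P.isPGroup'.to_le hHP) (X.isPGroup'.map _)
  refine ⟨X.toSubgroup.map K.subtype, P.is_maximal' hpgroup fun x hx => ?_, hK.permutes_conj_smul X⟩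
  obtain ⟨a, ha, b, hb, rfl⟩ := Set.mem_mul.1 (hK.1 ▸ Set.mem_univ x)
  have hbP : b ∈ (P : Subgroup G) := (mul_mem_cancel_left (hHP ha)).1 hx
  exact mul_mem_sup ha (mem_map.2 ⟨⟨b, hb⟩, hX (mem_subgroupOf.2 hbP), rfl⟩)

theorem IsSSPermutable.permutes_sylow_of_ne [Finite G] (h : IsSSPermutable H) {p q : ℕ}
    [Fact p.Prime] [Fact q.Prime] (hpq : p ≠ q) (hH : IsPGroup p H) (Q : Sylow q G) :
    Permutes H Q := by
  obtain ⟨K, hK⟩ := h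
  let X : Sylow q K := default
  obtain ⟨n, hn⟩ := hH.index (K.subgroupOf H)
  have hKindex : ¬ q ∣ K.index := by
    rw [index_eq_relIndex_of_mul_eq_univ hK.1, relIndex, hn]
    exact fun hdvd => hpq ((Nat.prime_dvd_prime_iff_eq Fact.out Fact.out).1
      ((Fact.out : q.Prime).dvd_of_dvd_pow hdvd)).symm
  have hXindex : ¬ q ∣ (X.toSubgroup.map K.subtype).index := by
    rw [index_map_subtype]
    exact (Fact.out : q.Prime).not_dvd_mul X.not_dvd_index hKindex
  obtain ⟨g, rfl⟩ := MulAction.exists_smul_eq G ((X.isPGroup'.map K.subtype).toSylow hXindex) Q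
  exact hK.permutes_conj_smul X g

end SSPermutable

section Abnormal

variable {G : Type*} [Group G] {H : Subgroup G}

namespace IsAbnormal

theorem of_map_subtype {M : Subgroup G} {H : Subgroup M} (h : IsAbnormal (H.map M.subtype)) :
    IsAbnormal H := by
  intro g
  have hmap : H.map M.subtype ⊔ (H.map M.subtype).map (MulAut.conj (g : G)).toMonoidHom =
      (H ⊔ H.map (MulAut.conj g).toMonoidHom).map M.subtype := by
    rw [Subgroup.map_sup, map_map, map_map]
    rfl
  exact (mem_map_iff_mem M.subtype_injective).1 (hmap ▸ h (g : G))

theorem map {G' : Type*} [Group G'] {f : G →* G'} (hf : Function.Surjective f)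
    (h : IsAbnormal H) : IsAbnormal (H.map f) := by
  intro g
  obtain ⟨g, rfl⟩ := hf g
  have hmap : (H ⊔ H.map (MulAut.conj g).toMonoidHom).map f =
      H.map f ⊔ (H.map f).map (MulAut.conj (f g)).toMonoidHom := by
    rw [Subgroup.map_sup, map_map, map_map]
    congr 2
    ext x
    simp
  exact hmap ▸ mem_map_of_mem f (h g)

theorem eq_top_of_le_normal (h : IsAbnormal H) {N : Subgroup G} [hN : N.Normal] (hHN : H ≤ N) :
    N = ⊤ := by
  refine (eq_top_iff' N).2 fun g => sup_le hHN ?_ (h g)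
  rintro _ ⟨x, hx, rfl⟩
  exact hN.conj_mem x (hHN hx) g

theorem normalizer_le (h : IsAbnormal H) : normalizer (H : Set G) ≤ H := by
  refine fun g hg => sup_le (le_refl H) ?_ (h g)
  rintro _ ⟨x, hx, rfl⟩
  exact (mem_normalizer_iff.1 hg x).1 hx

theorem eq_of_le_sylow [Finite G] (h : IsAbnormal H) {p : ℕ} [Fact p.Prime] {P : Sylow p G}
    (hHP : H ≤ P) : H = P := by
  have hab : IsAbnormal (H.subgroupOf P) := of_map_subtype (by rwa [map_subgroupOf_eq_of_le hHP])
  have : Group.IsNilpotent P := P.isPGroup'.isNilpotent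
  by_contra hne
  have hlt : H.subgroupOf P < ⊤ :=
    lt_top_iff_ne_top.2 fun htop => hne (hHP.antisymm (subgroupOf_eq_top.1 htop))
  exact (Group.normalizerCondition_of_isNilpotent _ hlt).not_ge hab.normalizer_le

theorem isPGroup_abelianization (h : IsAbnormal H) {p : ℕ} (hH : IsPGroup p H) :
    IsPGroup p (⊤ : Subgroup (Abelianization G)) := by
  have hsurj : Function.Surjective (Abelianization.of (G := G)) := QuotientGroup.mk_surjective
  rw [← (h.map hsurj).eq_top_of_le_normal le_rfl]
  exact hH.map _

end IsAbnormal

end Abnormal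

section SSPermutableOrAbnormal

/-- Condition (2) of the corollary: every subgroup of `G` is SS-permutable or abnormal. Unlike
the SST-property, it is visibly inherited by subgroups and quotients. -/
def SSPermutableOrAbnormal (G : Type*) [Group G] : Prop :=
  ∀ H : Subgroup G, IsSSPermutable H ∨ IsAbnormal H

namespace SSPermutableOrAbnormal

variable {G : Type*} [Group G] {p q : ℕ} {H : Subgroup G}

theorem subgroup (h : SSPermutableOrAbnormal G) (M : Subgroup G) : SSPermutableOrAbnormal M :=
  fun H => (h (H.map M.subtype)).imp (fun ⟨K, hK⟩ => ⟨K.subgroupOf M, hK.of_map_subtype⟩)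
    IsAbnormal.of_map_subtype

variable [Finite G]

theorem quotient (h : SSPermutableOrAbnormal G) (N : Subgroup G) [N.Normal] :
    SSPermutableOrAbnormal (G ⧸ N) := by
  have hsurj := QuotientGroup.mk'_surjective N
  intro H
  rw [← map_comap_eq_self_of_surjective hsurj H]
  exact (h (H.comap (QuotientGroup.mk' N))).imp (fun ⟨_, hK⟩ => ⟨_, hK.map hsurj⟩)
    (IsAbnormal.map hsurj)

variable [Fact p.Prime]

theorem isSSPermutable_of_lt_sylow (h : SSPermutableOrAbnormal G) {P : Sylow p G} (hHP : H < P) :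
    IsSSPermutable H :=
  (h H).resolve_right fun hab => hHP.ne (hab.eq_of_le_sylow hHP.le)

-- If a `p`-subgroup and a `q`-subgroup are both abnormal, the abelianization is trivial.
theorem permutes_sylow [Group.IsSolvable G] [Fact q.Prime] (h : SSPermutableOrAbnormal G)
    (hpq : p ≠ q) (hH : IsPGroup p H) (Q : Sylow q G) : Permutes H Q := by
  rcases h H with hss | hab
  · exact hss.permutes_sylow_of_ne hpq hH Q
  rcases h Q with hss | hab'
  · obtain ⟨P, hHP⟩ := hH.exists_le_sylow
    rw [hab.eq_of_le_sylow hHP]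
    exact (hss.permutes_sylow_of_ne hpq.symm Q.isPGroup' P).symm
  · have hdisj := IsPGroup.disjoint_of_ne p q hpq _ _ (hab.isPGroup_abelianization hH)
      (hab'.isPGroup_abelianization Q.isPGroup')
    have htop : commutator G = ⊤ := QuotientGroup.subsingleton_iff.1
      (Subgroup.subsingleton_iff.1 (subsingleton_iff_bot_eq_top.1 (disjoint_self.1 hdisj).symm))
    have : Subsingleton G := not_nontrivial_iff_subsingleton.1 fun _ =>
      (Group.IsSolvable.commutator_lt_top_of_nontrivial G).ne htop
    exact .of_le (Subsingleton.elim H Q).le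

end SSPermutableOrAbnormal

end SSPermutableOrAbnormal

section NormalComplement

variable {G : Type*} [Group G]

theorem commute_of_coprime_orderOf_commutatorElement {a k : G} (hk : Commute k ⁅a⁻¹, k⁆)
    (hcop : (orderOf k).Coprime (orderOf ⁅a⁻¹, k⁆)) : Commute k a := by
  have hconj : MulAut.conj a⁻¹ k = ⁅a⁻¹, k⁆ * k := by
    rw [MulAut.conj_apply, commutatorElement_def, inv_mul_cancel_right]
  have horder : orderOf k = orderOf ⁅a⁻¹, k⁆ * orderOf k := by
    rw [← hk.symm.orderOf_mul_eq_mul_orderOf_of_coprime hcop.symm, ← hconj, MulEquiv.orderOf_eq]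
  have hone : orderOf ⁅a⁻¹, k⁆ = 1 :=
    Nat.eq_one_of_dvd_coprimes hcop (Dvd.intro _ horder.symm) dvd_rfl
  rw [orderOf_eq_one_iff, commutatorElement_eq_one_iff_commute] at hone
  simpa using hone.symm.inv_right

-- The hypotheses force `⁅a⁻¹, y⁆ = ⁅b, x⁆`, an element commuting with `y`.
theorem commute_and_commute_of_commute_mul_mul {x y a b : G} (hxy : Commute x y)
    (hxa : Commute x a) (hyb : Commute y b) (hab : Commute (x * y) (a * b))
    (hcop : (orderOf y).Coprime (orderOf ⁅a⁻¹, y⁆)) : Commute y a ∧ Commute x b := by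
  have hmul : y * a * (x * b) = a * b * (x * y) :=
    calc y * a * (x * b) = y * (a * x) * b := by group
      _ = y * x * (a * b) := by rw [← hxa.eq]; group
      _ = a * b * (x * y) := by rw [← hxy.eq, hab.eq]
  have hcomm : ⁅a⁻¹, y⁆ = ⁅b, x⁆ :=
    calc ⁅a⁻¹, y⁆ = a⁻¹ * (y * a * (x * b)) * (y * b)⁻¹ * (y * x⁻¹ * y⁻¹) := by
          rw [commutatorElement_def]; group
      _ = b * x * (y * (y * b)⁻¹ * y) * x⁻¹ * y⁻¹ := by rw [hmul]; group
      _ = b * x * b⁻¹ * (y * x⁻¹) * y⁻¹ := by rw [hyb.eq]; group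
      _ = ⁅b, x⁆ := by rw [hxy.symm.inv_right.eq, commutatorElement_def]; group
  have hya : Commute y a := by
    refine commute_of_coprime_orderOf_commutatorElement ?_ hcop
    rw [hcomm, commutatorElement_def]
    exact ((hyb.mul_right hxy.symm).mul_right hyb.inv_right).mul_right hxy.symm.inv_right
  refine ⟨hya, (commutatorElement_eq_one_iff_commute.1 ?_).symm⟩
  rw [← hcomm, commutatorElement_eq_one_iff_commute]
  exact hya.symm.inv_left

theorem mem_centralizer_of_le_conj_smul {P V X : Subgroup G} [hV : V.Normal] (hPV : Disjoint V P)
    {w : G} (hw : w ∈ V) (hXP : X ≤ P) (hX : X ≤ MulAut.conj w • P) :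
    w ∈ centralizer (X : Set G) := by
  refine mem_centralizer_iff.2 fun x hx => ?_
  obtain ⟨y, hy, rfl⟩ := hX hx
  change w * y * w⁻¹ ∈ X at hx
  have hmem : w * y * w⁻¹ * y⁻¹ ∈ V := by
    simpa only [mul_assoc] using mul_mem hw (hV.conj_mem _ (inv_mem hw) y)
  have hone := disjoint_def.1 hPV hmem (mul_mem (hXP hx) (inv_mem hy))
  change w * y * w⁻¹ * w = w * (w * y * w⁻¹)
  rw [mul_inv_eq_one.1 hone, mul_inv_eq_iff_eq_mul.1 (mul_inv_eq_one.1 hone)]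

theorem inf_centralizer_mul_le_centralizer_sup {V : Subgroup G} [V.Normal] {x y : G}
    (hxy : Commute x y) (hcop : (orderOf y).Coprime (Nat.card V))
    (hV : (V : Set G) ⊆
      (V ⊓ centralizer {x} : Subgroup G) * (centralizer {y} : Subgroup G)) :
    V ⊓ centralizer {x * y} ≤ centralizer (zpowers x ⊔ zpowers y : Subgroup G) := by
  rintro c ⟨hcV, hc⟩
  obtain ⟨a, ⟨haV, ha⟩, b, hb, rfl⟩ := hV hcV
  have hxa : Commute x a := (mem_centralizer_singleton_iff.1 ha).symm
  have hyb : Commute y b := (mem_centralizer_singleton_iff.1 hb).symm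
  have hmem : ⁅a⁻¹, y⁆ ∈ V :=
    commutator_le_left V ⊤ (commutator_mem_commutator (inv_mem haV) (mem_top y))
  obtain ⟨hya, hxb⟩ := commute_and_commute_of_commute_mul_mul hxy hxa hyb
    (mem_centralizer_singleton_iff.1 hc).symm (hcop.coprime_dvd_right (V.orderOf_dvd_natCard hmem))
  have hle : zpowers x ⊔ zpowers y ≤ centralizer {a * b} := sup_le
    (zpowers_le.2 (mem_centralizer_singleton_iff.2 (hxa.mul_right hxb)))
    (zpowers_le.2 (mem_centralizer_singleton_iff.2 (hya.mul_right hyb)))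
  exact mem_centralizer_iff.2 fun g hg => mem_centralizer_singleton_iff.1 (hle hg)

theorem card_eq_of_bot_lt_of_lt_of_card_eq_sq {p : ℕ} (hp : p.Prime) {X P : Subgroup G}
    (hP : Nat.card P = p ^ 2) (hX : ⊥ < X) (hXP : X < P) : Nat.card X = p := by
  have : Finite P := Nat.finite_of_card_ne_zero (hP ▸ pow_ne_zero 2 hp.ne_zero)
  obtain ⟨n, hn, hcard⟩ := (Nat.dvd_prime_pow hp).1 (hP ▸ card_dvd_of_le hXP.le)
  interval_cases n
  · exact absurd (card_eq_one.1 hcard) hX.ne'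
  · rwa [pow_one] at hcard
  · exact absurd (eq_of_le_of_card_ge hXP.le (hP.trans hcard.symm).le) hXP.ne

theorem zpowers_lt_of_card_eq_sq {p : ℕ} (hp : p.Prime) {P : Subgroup G}
    (hP : Nat.card P = p ^ 2) {x : G} (hxP : x ∈ P) (hx : orderOf x = p) : zpowers x < P := by
  refine (zpowers_le.2 hxP).lt_of_ne fun e => ?_
  rw [← e, Nat.card_zpowers, hx] at hP
  exact (lt_self_pow₀ hp.one_lt one_lt_two).ne hP

variable [Finite G] {p : ℕ} [Fact p.Prime] {V : Subgroup G} [V.Normal] {P : Sylow p G}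

theorem exists_mem_conj_smul_eq_of_isComplement' (hVP : IsComplement' V P) (Q : Sylow p G) :
    ∃ w ∈ V, (Q : Subgroup G) = MulAut.conj w • P := by
  obtain ⟨g, rfl⟩ := MulAction.exists_smul_eq G P Q
  obtain ⟨w, hw, u, hu, rfl⟩ := mem_sup_of_normal_left.1 (hVP.sup_eq_top ▸ mem_top g)
  refine ⟨w, hw, ?_⟩
  rw [mul_smul, Sylow.coe_subgroup_smul, Sylow.coe_subgroup_smul, conj_smul_eq_self_of_mem hu]

-- For `v ∈ V` the subgroup `H` permutes with `X ^ v`, so `⟨H, X ^ v⟩` is a `p`-group and lies in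
-- `P ^ w` for some `w ∈ V`; then `w` centralizes `H` and `w⁻¹ v` centralizes `X`.
theorem IsSSPermutable.exists_subset_centralizer_mul_centralizer {H : Subgroup G}
    (h : IsSSPermutable H) (hVP : IsComplement' V P) (hHP : H ≤ P) :
    ∃ X : Subgroup G, H ⊔ X = P ∧ (V : Set G) ⊆
      (V ⊓ centralizer (H : Set G) : Subgroup G) * (centralizer (X : Set G) : Subgroup G) := by
  obtain ⟨X, hX, hperm⟩ := h.exists_sup_eq_sylow P hHP
  have hXP : X ≤ P := hX ▸ le_sup_right
  refine ⟨X, hX, fun v hv => ?_⟩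
  have hXv : IsPGroup p (MulAut.conj v • X : Subgroup G) := (P.isPGroup'.to_le hXP).map _
  obtain ⟨Q, hQ⟩ := ((hperm v).isPGroup_sup (P.isPGroup'.to_le hHP) hXv).exists_le_sylow
  obtain ⟨w, hw, hQw⟩ := exists_mem_conj_smul_eq_of_isComplement' hVP Q
  obtain ⟨hHw, hXw⟩ := sup_le_iff.1 (hQw ▸ hQ)
  have hwX : v⁻¹ * w ∈ centralizer (X : Set G) := by
    refine mem_centralizer_of_le_conj_smul hVP.disjoint (mul_mem (inv_mem hv) hw) hXP ?_
    rwa [map_mul, mul_smul, map_inv, ← pointwise_smul_subset_iff]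
  refine Set.mem_mul.2 ⟨w, ⟨hw, mem_centralizer_of_le_conj_smul hVP.disjoint hw hHP hHw⟩, w⁻¹ * v,
    ?_, mul_inv_cancel_left w v⟩
  simpa using inv_mem hwX

namespace SSPermutableOrAbnormal

theorem exists_zpowers_sup_eq_of_inf_centralizer_eq_bot (h : SSPermutableOrAbnormal G)
    (hVP : IsComplement' V P) (hP : Nat.card P = p ^ 2)
    (hfaith : (P : Subgroup G) ⊓ centralizer (V : Set G) = ⊥) {x : G} (hxP : x ∈ P)
    (hx : orderOf x = p) :
    ∃ y, orderOf y = p ∧ zpowers x ⊔ zpowers y = P ∧ (V : Set G) ⊆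
      (V ⊓ centralizer {x} : Subgroup G) * (centralizer {y} : Subgroup G) := by
  have hp : p.Prime := Fact.out
  have hxlt : zpowers x < P := zpowers_lt_of_card_eq_sq hp hP hxP hx
  obtain ⟨X, hX, hV⟩ := (h.isSSPermutable_of_lt_sylow
    hxlt).exists_subset_centralizer_mul_centralizer hVP hxlt.le
  rw [zpowers_eq_closure, centralizer_closure] at hV
  have hXlt : X < P := by
    refine (hX ▸ le_sup_right : X ≤ P).lt_of_ne ?_
    rintro rfl
    have hxV : x ∈ centralizer (V : Set G) := mem_centralizer_iff.2 fun v hv => by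
      obtain ⟨a, ha, b, hb, rfl⟩ := hV hv
      exact (mem_centralizer_singleton_iff.1 (mul_mem ha.2
        (centralizer_le (Set.singleton_subset_iff.2 hxP) hb)))
    exact hp.ne_one (by simpa [hx] using orderOf_eq_one_iff.2 (hfaith.le ⟨hxP, hxV⟩))
  have hXbot : ⊥ < X := bot_lt_iff_ne_bot.2 fun e => hxlt.ne (by simpa [e] using hX)
  have hXcard := card_eq_of_bot_lt_of_lt_of_card_eq_sq hp hP hXbot hXlt
  obtain ⟨⟨y, hyX⟩, hy⟩ := exists_prime_orderOf_dvd_card' (G := X) p hXcard.symm.dvd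
  rw [orderOf_mk] at hy
  obtain rfl : zpowers y = X :=
    eq_of_le_of_card_ge (zpowers_le.2 hyX) (by rw [Nat.card_zpowers, hy, hXcard])
  rw [zpowers_eq_closure, centralizer_closure] at hV
  exact ⟨y, hy, hX, hV⟩

-- If `P` were faithful on `V`, then `P = ⟨x⟩ × ⟨y⟩` with `V = C_V(x) C_V(y)`, and the partner `z`
-- of `x y` would centralize `V`.
theorem inf_centralizer_ne_bot (h : SSPermutableOrAbnormal G) (hVP : IsComplement' V P)
    (hP : Nat.card P = p ^ 2) : (P : Subgroup G) ⊓ centralizer (V : Set G) ≠ ⊥ := by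
  intro hfaith
  have hp : p.Prime := Fact.out
  have hV : ¬ p ∣ Nat.card V := hVP.index_eq_card ▸ P.not_dvd_index
  have hPcomm : (P : Subgroup G) ≤ centralizer (P : Set G) :=
    have := IsPGroup.isMulCommutative_of_card_eq_prime_sq hP
    le_centralizer _
  obtain ⟨⟨x, hxP⟩, hx⟩ := exists_prime_orderOf_dvd_card' (G := P) p
    (hP ▸ dvd_pow_self p two_ne_zero)
  rw [← orderOf_coe] at hx
  obtain ⟨y, hy, hxyP, hVxy⟩ :=
    h.exists_zpowers_sup_eq_of_inf_centralizer_eq_bot hVP hP hfaith hxP hx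
  have hyP : y ∈ P := hxyP.le (mem_sup_right (mem_zpowers y))
  have hxy : Commute x y := (mem_centralizer_iff.1 (hPcomm hxP) y hyP).symm
  have hxyp : orderOf (x * y) = p := by
    refine orderOf_eq_prime ?_ fun e => ?_
    · rw [hxy.mul_pow, ← hx, pow_orderOf_eq_one, hx, ← hy, pow_orderOf_eq_one, one_mul]
    · rw [← inv_eq_of_mul_eq_one_right e, zpowers_inv, sup_idem] at hxyP
      exact (zpowers_lt_of_card_eq_sq hp hP hxP hx).ne hxyP
  obtain ⟨z, hz, hzP, hVz⟩ := h.exists_zpowers_sup_eq_of_inf_centralizer_eq_bot hVP hP hfaith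
    (mul_mem hxP hyP) hxyp
  have hzP : z ∈ P := hzP.le (mem_sup_right (mem_zpowers z))
  have hcop : (orderOf y).Coprime (Nat.card V) := by
    rw [hy]
    exact hp.coprime_iff_not_dvd.2 hV
  have hcentral := hxyP ▸ inf_centralizer_mul_le_centralizer_sup hxy hcop hVxy
  have hzV : z ∈ centralizer (V : Set G) := mem_centralizer_iff.2 fun v hv => by
    obtain ⟨c, hc, d, hd, rfl⟩ := hVz hv
    have hcz : c ∈ centralizer {z} :=
      centralizer_le (Set.singleton_subset_iff.2 hzP) (hcentral hc)
    exact mem_centralizer_singleton_iff.1 (mul_mem hcz hd)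
  exact hp.ne_one (hz.symm.trans (orderOf_eq_one_iff.2 (hfaith.le ⟨hzP, hzV⟩)))

theorem index_ne_prime_sq (h : SSPermutableOrAbnormal G) (hcore : pCore p G = ⊥)
    (hV : ¬ p ∣ Nat.card V) : V.index ≠ p ^ 2 := by
  intro hidx
  have hp : p.Prime := Fact.out
  let P : Sylow p G := default
  have hP : Nat.card P = p ^ 2 := by
    rw [P.card_eq_multiplicity, ← V.card_mul_index, hidx,
      Nat.factorization_mul Nat.card_pos.ne' (pow_ne_zero 2 hp.ne_zero), Finsupp.add_apply,
      Nat.factorization_eq_zero_of_not_dvd hV, hp.factorization_pow, Finsupp.single_eq_same,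
      zero_add]
  have hVP : IsComplement' V P := by
    refine isComplement'_of_coprime (by rw [hP, ← hidx, card_mul_index]) ?_
    rw [hP]
    exact ((hp.coprime_iff_not_dvd.2 hV).pow_left 2).symm
  have hPcomm : (P : Subgroup G) ≤ centralizer (P : Set G) :=
    have := IsPGroup.isMulCommutative_of_card_eq_prime_sq hP
    le_centralizer _
  have hcentral : (P : Subgroup G) ⊓ centralizer (V : Set G) ≤ center G := by
    refine centralizer_eq_top_iff_subset.1 (top_le_iff.1 (hVP.sup_eq_top ▸ sup_le ?_ ?_))
    · exact le_centralizer_iff.1 inf_le_right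
    · exact hPcomm.trans (centralizer_le inf_le_left)
  have hnormal : ((P : Subgroup G) ⊓ centralizer (V : Set G)).Normal :=
    ⟨fun z hz g => by rwa [mem_center_iff.1 (hcentral hz) g, mul_inv_cancel_right]⟩
  exact h.inf_centralizer_ne_bot hVP hP
    (le_bot_iff.1 (hcore ▸ le_pCore (P.isPGroup'.to_le inf_le_left)))

end SSPermutableOrAbnormal

end NormalComplement

section Solvable

variable {G : Type*} [Group G] [Group.IsSolvable G]

theorem exists_normal_not_le_commutator_le {M : Subgroup G} (hM : M ≠ ⊤) :
    ∃ D : Subgroup G, D.Normal ∧ ¬ D ≤ M ∧ ⁅D, D⁆ ≤ M := by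
  classical
  obtain ⟨m, hm⟩ := Group.IsSolvable.solvable (G := G)
  have hex : ∃ n, derivedSeries G n ≤ M := ⟨m, hm.trans_le bot_le⟩
  obtain ⟨n, hn⟩ : ∃ n, Nat.find hex = n + 1 := by
    refine Nat.exists_eq_succ_of_ne_zero fun h0 => hM (top_le_iff.1 ?_)
    simpa [h0] using Nat.find_spec hex
  refine ⟨derivedSeries G n, derivedSeries_normal G n, Nat.find_min hex (by lia), ?_⟩
  rw [← derivedSeries_succ, ← hn]
  exact Nat.find_spec hex

theorem exists_normal_isPGroup_ne_bot [Finite G] [Nontrivial G] :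
    ∃ q : ℕ, q.Prime ∧ ∃ Q : Subgroup G, Q.Normal ∧ IsPGroup q Q ∧ Q ≠ ⊥ := by
  obtain ⟨D, hD, hne, hcomm⟩ := exists_normal_not_le_commutator_le (bot_ne_top (α := Subgroup G))
  have hcomm : IsMulCommutative D := le_centralizer_iff_isMulCommutative.1
    (commutator_eq_bot_iff_le_centralizer.1 (le_bot_iff.1 hcomm))
  obtain ⟨q, hq, hdvd⟩ := Nat.exists_prime_and_dvd (mt card_eq_one.1 (mt Eq.le hne))
  have : Fact q.Prime := ⟨hq⟩
  let S : Sylow q D := default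
  have := S.characteristic_of_normal (normal_of_isMulCommutative _)
  refine ⟨q, hq, S.toSubgroup.map D.subtype, ConjAct.normal_of_characteristic_of_normal,
    S.isPGroup'.map _, fun h => S.ne_bot_of_dvd_card hdvd ?_⟩
  exact (map_eq_bot_iff_of_injective _ D.subtype_injective).1 h

end Solvable

section NormalPGroup

variable {G : Type*} [Group G] [Finite G] {q : ℕ} [Fact q.Prime] {A : Subgroup G} [A.Normal]

theorem inf_centralizer_ne_bot_of_isPGroup {Q : Subgroup G} (hQ : IsPGroup q Q)
    (hA : IsPGroup q A) (hne : A ≠ ⊥) : A ⊓ centralizer (Q : Set G) ≠ ⊥ := by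
  let _ : MulAction Q A :=
    MulAction.compHom A ((MulAut.conjNormal (H := A)).comp Q.subtype)
  have hsmul (g : Q) (a : A) : ((g • a : A) : G) = g * a * (g : G)⁻¹ := rfl
  have hdvd : q ∣ Nat.card A := hA.card_eq_or_dvd.resolve_left (mt card_eq_one.1 hne)
  obtain ⟨b, hb, hb1⟩ := hQ.exists_fixed_point_of_prime_dvd_card_of_fixed_point A hdvd
    (a := 1) (fun g => Subtype.ext (by rw [hsmul]; simp))
  have hbQ : (b : G) ∈ centralizer (Q : Set G) := mem_centralizer_iff.2 fun g hg =>
    mul_inv_eq_iff_eq_mul.1 (by rw [← hsmul ⟨g, hg⟩ b, hb ⟨g, hg⟩])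
  exact fun h => hb1 (Subtype.ext (mem_bot.1 (h.le ⟨b.2, hbQ⟩)).symm)

theorem eq_top_of_forall_exists_sylow_le {H : Subgroup G}
    (h : ∀ (r : ℕ) [Fact r.Prime], ∃ R : Sylow r G, (R : Subgroup G) ≤ H) : H = ⊤ :=
  eq_top_of_forall_prime_not_dvd_index fun r hr =>
    have : Fact r.Prime := ⟨hr⟩
    let ⟨R, hR⟩ := h r
    not_dvd_index_of_sylow_le R hR

theorem SSPermutableOrAbnormal.exists_normal_card_eq [Group.IsSolvable G]
    (h : SSPermutableOrAbnormal G) (hA : IsPGroup q A) (hne : A ≠ ⊥) :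
    ∃ N : Subgroup G, N.Normal ∧ Nat.card N = q := by
  let Q : Sylow q G := default
  have hB : IsPGroup q (A ⊓ centralizer (Q : Set G) : Subgroup G) := hA.to_inf_left
  obtain ⟨⟨y, hyB⟩, hy⟩ := exists_prime_orderOf_dvd_card' q (hB.card_eq_or_dvd.resolve_left
    (mt card_eq_one.1 (inf_centralizer_ne_bot_of_isPGroup Q.isPGroup' hA hne)))
  rw [orderOf_mk] at hy
  obtain ⟨hyA, hyQ⟩ := hyB
  refine ⟨zpowers y, normalizer_eq_top_iff.1 (eq_top_of_forall_exists_sylow_le fun r _ => ?_),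
    by rw [Nat.card_zpowers, hy]⟩
  by_cases hqr : q = r
  · subst hqr
    exact ⟨Q, (le_centralizer_iff.1 (zpowers_le.2 hyQ)).trans (centralizer_le_normalizer _)⟩
  · refine ⟨default, (h.permutes_sylow hqr (hA.to_le (zpowers_le.2 hyA))
      default).le_normalizer_of_le_normal (zpowers_le.2 hyA) ?_⟩
    exact (IsPGroup.disjoint_of_ne q r hqr _ _ hA (default : Sylow r G).isPGroup').symm

end NormalPGroup

section AlmostPClosed

variable {G : Type*} [Group G] {p : ℕ}

/-- The subgroups `M` and `O` witness that `G` is almost `p`-closed (`IsAlmostPClosed`): both are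
normal in `G`, `M` has index `1` or `p` and `O` is a Sylow `p`-subgroup of `M`, the last being
expressed through the index so that `O` need not be regarded as a subgroup of `M`. -/
structure IsPClosedPair (p : ℕ) (M O : Subgroup G) : Prop where
  normal_left : M.Normal
  normal_right : O.Normal
  le : O ≤ M
  isPGroup : IsPGroup p O
  not_dvd_relIndex : ¬ p ∣ O.relIndex M
  index_dvd : M.index ∣ p

/-- `G` is almost `p`-closed if a normal subgroup of index `1` or `p` is `p`-closed, that is, has a
normal Sylow `p`-subgroup. -/
def IsAlmostPClosed (p : ℕ) (G : Type*) [Group G] : Prop :=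
  ∃ M O : Subgroup G, IsPClosedPair p M O

theorem IsPClosedPair.comap {G' : Type*} [Group G'] {f : G →* G'} (hf : Function.Surjective f)
    (hker : IsPGroup p f.ker) {M O : Subgroup G'} (h : IsPClosedPair p M O) :
    IsPClosedPair p (M.comap f) (O.comap f) where
  normal_left := h.normal_left.comap f
  normal_right := h.normal_right.comap f
  le := comap_mono h.le
  isPGroup := h.isPGroup.comap_of_ker_isPGroup f hker
  not_dvd_relIndex := by
    rw [relIndex_comap, map_comap_eq_self_of_surjective hf]
    exact h.not_dvd_relIndex
  index_dvd := (index_comap_of_surjective M hf).dvd.trans h.index_dvd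

theorem exists_normal_index_eq_of_dvd_card_range {C : Type*} [CommGroup C] [Finite C] [IsCyclic C]
    (f : G →* C) (hp : p ∣ Nat.card f.range) : ∃ M : Subgroup G, M.Normal ∧ M.index = p := by
  refine ⟨(powMonoidHom p : f.range →* f.range).range.comap f.rangeRestrict, inferInstance, ?_⟩
  rw [index_comap_of_surjective _ f.rangeRestrict_surjective, IsCyclic.index_powMonoidHom_range,
    Nat.gcd_eq_right hp]

theorem le_ker_of_forall_normal_index_ne [Fact p.Prime]
    (hidx : ∀ M : Subgroup G, M.Normal → M.index ≠ p) {P : Subgroup G} (hP : IsPGroup p P)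
    {C : Type*} [CommGroup C] [Finite C] [IsCyclic C] (f : G →* C) : P ≤ f.ker := by
  intro g hg
  by_contra hne
  have hdvd : p ∣ orderOf (f g) := by
    rw [← orderOf_mk _ (mem_map_of_mem f hg)]
    exact (hP.map f).dvd_orderOf (mt (congrArg Subtype.val) hne)
  obtain ⟨M, hM, e⟩ := exists_normal_index_eq_of_dvd_card_range f
    (hdvd.trans (f.range.orderOf_dvd_natCard ⟨g, rfl⟩))
  exact hidx M hM e

-- `Aut N` is cyclic, since `N` has prime order.
theorem le_centralizer_of_forall_normal_index_ne [Fact p.Prime]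
    (hidx : ∀ M : Subgroup G, M.Normal → M.index ≠ p) {P : Subgroup G} (hP : IsPGroup p P)
    {q : ℕ} [Fact q.Prime] {N : Subgroup G} [N.Normal] (hN : Nat.card N = q) :
    P ≤ centralizer (N : Set G) := by
  have : IsCyclic N := isCyclic_of_prime_card hN
  have : Fact (Nat.card N).Prime := hN ▸ ‹Fact q.Prime›
  let e : MulAut N ≃* (ZMod (Nat.card N))ˣ := IsCyclic.mulAutMulEquiv N
  refine fun g hg => mem_centralizer_iff.2 fun n hn => ?_
  have hker := le_ker_of_forall_normal_index_ne hidx hP (e.toMonoidHom.comp MulAut.conjNormal) hg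
  have hone : MulAut.conjNormal (H := N) g = 1 := e.map_eq_one_iff.1 hker
  have hconj : g * n * g⁻¹ = n := by
    rw [← MulAut.conjNormal_apply g (⟨n, hn⟩ : N), hone, MulAut.one_apply]
  exact (mul_inv_eq_iff_eq_mul.1 hconj).symm

variable [Finite G] [Fact p.Prime]

theorem isPClosedPair_top_sylow (P : Sylow p G) [hP : (P : Subgroup G).Normal] :
    IsPClosedPair p ⊤ (P : Subgroup G) where
  normal_left := inferInstance
  normal_right := hP
  le := le_top
  isPGroup := P.isPGroup'
  not_dvd_relIndex := by
    rw [relIndex_top_right]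
    exact P.not_dvd_index
  index_dvd := by simp

theorem IsAlmostPClosed.of_quotient_of_forall_index_ne {N : Subgroup G} [N.Normal] {q : ℕ}
    [Fact q.Prime] (hN : Nat.card N = q) (hidx : ∀ M : Subgroup G, M.Normal → M.index ≠ p)
    (h : IsAlmostPClosed p (G ⧸ N)) : IsAlmostPClosed p G := by
  obtain ⟨M, O, hMO⟩ := h
  have := hMO.normal_right
  have hsurj := QuotientGroup.mk'_surjective N
  obtain rfl : M = ⊤ := by
    refine index_eq_one.1 (((Nat.dvd_prime Fact.out).1 hMO.index_dvd).resolve_right fun e => ?_)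
    exact hidx (M.comap (QuotientGroup.mk' N)) (hMO.normal_left.comap _)
      ((index_comap_of_surjective _ hsurj).trans e)
  let P : Sylow p G := default
  have hPO : (P : Subgroup G).map (QuotientGroup.mk' N) = O :=
    (le_of_isPGroup_of_not_dvd_relIndex (P.isPGroup'.map _) le_top hMO.not_dvd_relIndex).antisymm
      (hMO.isPGroup.le_sylow_of_normal (P.mapSurjective hsurj))
  have hL : (N ⊔ P).Normal := by
    rw [← QuotientGroup.comap_map_mk', hPO]
    exact hMO.normal_right.comap _
  have hcomm : (P : Subgroup G) ≤ centralizer (N : Set G) :=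
    le_centralizer_of_forall_normal_index_ne hidx P.isPGroup' hN
  have hPnormal : (P : Subgroup G).Normal := sylow_normal_of_le_normalizer P le_sup_right
    (sup_le ((le_centralizer_iff.1 hcomm).trans (centralizer_le_normalizer _)) le_normalizer)
  exact ⟨⊤, P, isPClosedPair_top_sylow P⟩

-- If `M` is not a `p'`-group, it has a normal `p`-complement, of index `p ^ 2` in `G`.
theorem IsAlmostPClosed.of_normal_index_eq (h : SSPermutableOrAbnormal G)
    (hcore : pCore p G = ⊥) {M : Subgroup G} [hM : M.Normal] (hidx : M.index = p)
    (hMp : IsAlmostPClosed p M) : IsAlmostPClosed p G := by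
  obtain ⟨V, O, hVO⟩ := hMp
  have := hVO.normal_left
  have := hVO.normal_right
  obtain rfl : O = ⊥ := le_bot_iff.1 (pCore_eq_bot_of_normal hcore M ▸ le_pCore hVO.isPGroup)
  have hV : ¬ p ∣ Nat.card V := relIndex_bot_left V ▸ hVO.not_dvd_relIndex
  rcases (Nat.dvd_prime Fact.out).1 hVO.index_dvd with e | e
  · refine ⟨M, ⊥, hM, inferInstance, bot_le, .of_bot, ?_, hidx.dvd⟩
    rwa [relIndex_bot_left, ← card_top, ← index_eq_one.1 e]
  · have : V.Characteristic := characteristic_of_coprime_card_index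
      (e ▸ ((Fact.out : p.Prime).coprime_iff_not_dvd.2 hV).symm)
    have hnormal : (V.map M.subtype).Normal := ConjAct.normal_of_characteristic_of_normal
    refine absurd ?_ (h.index_ne_prime_sq hcore (V := V.map M.subtype)
      (by rwa [card_map_of_injective M.subtype_injective]))
    rw [index_map_subtype, e, hidx, sq]

theorem SSPermutableOrAbnormal.isAlmostPClosed [Group.IsSolvable G]
    (h : SSPermutableOrAbnormal G) : IsAlmostPClosed p G := by
  induction hn : Nat.card G using Nat.strong_induction_on generalizing G with
  | _ n ih =>
    subst hn
    have hquot (N : Subgroup G) [N.Normal] (hne : N ≠ ⊥) : IsAlmostPClosed p (G ⧸ N) := by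
      refine ih _ ?_ (h.quotient N) rfl
      rw [N.card_eq_card_quotient_mul_card_subgroup]
      exact lt_mul_of_one_lt_right Nat.card_pos ((one_lt_card_iff_ne_bot N).2 hne)
    by_cases hcore : pCore p G = ⊥
    swap
    · obtain ⟨M, O, hMO⟩ := hquot (pCore p G) hcore
      exact ⟨_, _, hMO.comap (QuotientGroup.mk'_surjective _)
        (by rw [QuotientGroup.ker_mk']; exact isPGroup_pCore)⟩
    by_cases hidx : ∃ M : Subgroup G, M.Normal ∧ M.index = p
    · obtain ⟨M, hM, e⟩ := hidx
      refine .of_normal_index_eq h hcore e (ih _ ?_ (h.subgroup M) rfl)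
      rw [← M.card_mul_index, e]
      exact lt_mul_of_one_lt_right Nat.card_pos (Fact.out : p.Prime).one_lt
    rcases subsingleton_or_nontrivial G with _ | _
    · have : ((default : Sylow p G) : Subgroup G).Normal := normal_of_isMulCommutative _
      exact ⟨⊤, _, isPClosedPair_top_sylow default⟩
    obtain ⟨q, hq, A, hA, hqA, hne⟩ := exists_normal_isPGroup_ne_bot (G := G)
    have : Fact q.Prime := ⟨hq⟩
    obtain ⟨N, hN, hcard⟩ := h.exists_normal_card_eq hqA hne
    have hNbot : N ≠ ⊥ := mt card_eq_one.2 (hcard ▸ hq.ne_one)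
    exact .of_quotient_of_forall_index_ne hcard (fun M hM e => hidx ⟨M, hM, e⟩) (hquot N hNbot)

end AlmostPClosed

section NormalSupplement

variable {G : Type*} [Group G] {H : Subgroup G}

theorem sup_eq_top_of_index_dvd_prime {p : ℕ} (hp : p.Prime) {M L : Subgroup G}
    (hM : M.index ∣ p) (hL : ¬ L ≤ M) : M ⊔ L = ⊤ := by
  refine index_eq_one.1 (((Nat.dvd_prime hp).1
    ((index_dvd_of_le le_sup_left).trans hM)).resolve_right fun e => hL ?_)
  have hmul := relIndex_mul_index (le_sup_left : M ≤ M ⊔ L)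
  rw [e] at hmul
  exact le_sup_right.trans (relIndex_eq_one.1 (Nat.dvd_one.1
    (Nat.dvd_of_mul_dvd_mul_right hp.pos (by rwa [hmul, one_mul]))))

theorem IsPClosedPair.not_dvd_index {p : ℕ} (hp : p.Prime) {M O L : Subgroup G}
    (h : IsPClosedPair p M O) (hO : O ≤ L) (hL : ¬ L ≤ M) : ¬ p ∣ L.index := by
  have := h.normal_left
  have hmul : (M : Set G) * (L : Set G) = Set.univ := by
    rw [← normal_mul, sup_eq_top_of_index_dvd_prime hp h.index_dvd hL, coe_top]
  rw [index_eq_relIndex_of_mul_eq_univ hmul]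
  exact fun hdvd => h.not_dvd_relIndex (hdvd.trans (relIndex_dvd_of_le_left M hO))

theorem sylow_map_subtype_eq_of_le {p : ℕ} {K Y : Subgroup G} (X : Sylow p K)
    (hY : IsPGroup p Y) (hYK : Y ≤ K) (hXY : X.toSubgroup.map K.subtype ≤ Y) :
    X.toSubgroup.map K.subtype = Y := by
  rw [← map_subgroupOf_eq_of_le hYK, subgroupOf,
    X.is_maximal' (hY.comap_of_injective _ K.subtype_injective) (map_le_iff_le_comap.1 hXY)]

/-- The intersection of the subgroups `M p` that do not contain `H`, for `p` prime. When each `M p`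
is normal of index dividing `p` and `p`-closed, this will be a normal supplement of `H` witnessing
that `H` is NSS-permutable. -/
def normalSupplement (H : Subgroup G) (M : ℕ → Subgroup G) : Subgroup G :=
  ⨅ p : {p : ℕ // p.Prime ∧ ¬ H ≤ M p}, M p

theorem normalSupplement_le {M : ℕ → Subgroup G} {p : ℕ} (hp : p.Prime) (hHM : ¬ H ≤ M p) :
    normalSupplement H M ≤ M p :=
  iInf_le (fun p : {p : ℕ // p.Prime ∧ ¬ H ≤ M p} => M p) ⟨p, hp, hHM⟩

theorem normalSupplement_normal {M : ℕ → Subgroup G} (hM : ∀ p, p.Prime → (M p).Normal) :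
    (normalSupplement H M).Normal :=
  normal_iInf_normal fun p => hM p p.2.1

variable [Finite G]

theorem SSPermutableOrAbnormal.permutes_sylow_of_le [Group.IsSolvable G]
    (h : SSPermutableOrAbnormal G) {p : ℕ} [Fact p.Prime] {M O : Subgroup G}
    (hMO : IsPClosedPair p M O) (hHM : H ≤ M) (P : Sylow p G) : Permutes H P := by
  have := hMO.normal_right
  have hH : ⨆ q : Nat.Primes, (default : Sylow q H).toSubgroup.map H.subtype = H := by
    rw [← Subgroup.map_iSup, iSup_sylow_eq_top, ← MonoidHom.range_eq_map, range_subtype]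
  rw [← hH]
  refine Permutes.iSup_left fun q => ?_
  have : Fact (q : ℕ).Prime := ⟨q.2⟩
  let Q : Sylow q H := default
  have hQ : IsPGroup q (Q.toSubgroup.map H.subtype) := Q.isPGroup'.map _
  by_cases hqp : q = p
  · refine .of_le (le_trans ?_ (hMO.isPGroup.le_sylow_of_normal P))
    exact le_of_isPGroup_of_not_dvd_relIndex (hqp ▸ hQ) ((map_subtype_le _).trans hHM)
      hMO.not_dvd_relIndex
  · exact h.permutes_sylow hqp hQ P

variable {M O : ℕ → Subgroup G}

theorem le_normalSupplement (hMO : ∀ p, p.Prime → IsPClosedPair p (M p) (O p)) {p : ℕ}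
    [Fact p.Prime] {X : Subgroup G} (hX : IsPGroup p X) (hXM : ¬ H ≤ M p → X ≤ M p) :
    X ≤ normalSupplement H M := by
  refine le_iInf fun ⟨q, hq, hHM⟩ => ?_
  by_cases hpq : p = q
  · exact hpq ▸ hXM (hpq ▸ hHM)
  · have := (hMO q hq).normal_left
    refine le_of_isPGroup_of_not_dvd_relIndex hX le_top fun hdvd => hpq ?_
    rw [relIndex_top_right] at hdvd
    exact (Nat.prime_dvd_prime_iff_eq Fact.out hq).1 (hdvd.trans (hMO q hq).index_dvd)

theorem sup_normalSupplement_eq_top (hMO : ∀ p, p.Prime → IsPClosedPair p (M p) (O p)) :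
    H ⊔ normalSupplement H M = ⊤ := by
  refine eq_top_of_forall_prime_not_dvd_index fun p hp => ?_
  have : Fact p.Prime := ⟨hp⟩
  by_cases hHM : H ≤ M p
  · refine not_dvd_index_of_sylow_le default (le_sup_of_le_right ?_)
    exact le_normalSupplement hMO (default : Sylow p G).isPGroup' (absurd hHM)
  · have hO := le_normalSupplement (H := H) hMO (hMO p hp).isPGroup fun _ => (hMO p hp).le
    exact (hMO p hp).not_dvd_index hp (le_sup_of_le_right hO) fun hle =>
      hHM (le_sup_left.trans hle)

theorem SSPermutableOrAbnormal.isSSSupplement_normalSupplement [Group.IsSolvable G]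
    (h : SSPermutableOrAbnormal G) (hMO : ∀ p, p.Prime → IsPClosedPair p (M p) (O p)) :
    IsSSSupplement H (normalSupplement H M) := by
  have hK : (normalSupplement H M).Normal :=
    normalSupplement_normal fun p hp => (hMO p hp).normal_left
  refine ⟨by rw [← mul_normal, sup_normalSupplement_eq_top hMO, coe_top], fun p hp X => ?_⟩
  have hMOp := hMO p hp.out
  have hX : IsPGroup p (X.toSubgroup.map (normalSupplement H M).subtype) := X.isPGroup'.map _
  change Permutes H (X.toSubgroup.map _)
  by_cases hHM : H ≤ M p
  · obtain ⟨P, hXP⟩ := hX.exists_le_sylow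
    have hPK := le_normalSupplement hMO P.isPGroup' (absurd hHM)
    rw [sylow_map_subtype_eq_of_le X P.isPGroup' hPK hXP]
    exact h.permutes_sylow_of_le hMOp hHM P
  · have := hMOp.normal_right
    have hXO := le_of_isPGroup_of_not_dvd_relIndex hX
      ((map_subtype_le _).trans (normalSupplement_le hp.out hHM)) hMOp.not_dvd_relIndex
    have hOK := le_normalSupplement (H := H) hMO hMOp.isPGroup fun _ => hMOp.le
    rw [sylow_map_subtype_eq_of_le X hMOp.isPGroup hOK hXO]
    exact .of_normal _ _

theorem SSPermutableOrAbnormal.isNSSPermutable [Group.IsSolvable G]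
    (h : SSPermutableOrAbnormal G) (H : Subgroup G) : IsNSSPermutable H := by
  have hex : ∀ p : ℕ, p.Prime → ∃ M O : Subgroup G, IsPClosedPair p M O := fun p hp =>
    have : Fact p.Prime := ⟨hp⟩
    h.isAlmostPClosed
  choose! M O hMO using hex
  exact ⟨_, normalSupplement_normal fun p hp => (hMO p hp).normal_left,
    h.isSSSupplement_normalSupplement hMO⟩

end NormalSupplement

section Transitivity

variable {G : Type*} [Group G]

theorem isCoatom_subgroupOf_of_covBy {H M : Subgroup G} (h : H ⋖ M) :
    IsCoatom (H.subgroupOf M) := by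
  refine ⟨fun htop => h.lt.not_ge (subgroupOf_eq_top.1 htop), fun L hL => ?_⟩
  have hlt : H < L.map M.subtype := by
    rw [← map_subgroupOf_eq_of_le h.le]
    exact (map_lt_map_iff_of_injective M.subtype_injective).2 hL
  refine map_injective M.subtype_injective ?_
  rw [(h.eq_or_eq hlt.le (map_subtype_le L)).resolve_left hlt.ne', ← MonoidHom.range_eq_map,
    range_subtype]

variable [Finite G]

-- In `G / D'` the image of `X` is the unique Sylow `p`-subgroup of the abelian normal subgroup
-- `D / D'`.
theorem commutator_sup_sylow_normal {p : ℕ} [Fact p.Prime] {D : Subgroup G} [D.Normal]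
    (X : Sylow p D) : (⁅D, D⁆ ⊔ X.toSubgroup.map D.subtype).Normal := by
  let π : G →* G ⧸ ⁅D, D⁆ := QuotientGroup.mk' ⁅D, D⁆
  have hcomm : IsMulCommutative (D.map π) := by
    rw [← le_centralizer_iff_isMulCommutative, ← commutator_eq_bot_iff_le_centralizer,
      ← map_commutator, QuotientGroup.map_mk'_self]
  have hD : (D.map π).Normal := Normal.map ‹_› π (QuotientGroup.mk'_surjective _)
  let Y : Sylow p (D.map π) := X.mapSurjective (π.subgroupMap_surjective D)
  have := Y.characteristic_of_normal (normal_of_isMulCommutative _)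
  have hY : Y.toSubgroup.map (D.map π).subtype = (X.toSubgroup.map D.subtype).map π := by
    rw [Sylow.coe_mapSurjective, map_map, map_map]
    rfl
  rw [← QuotientGroup.comap_map_mk', ← hY]
  exact ConjAct.normal_of_characteristic_of_normal.comap π

variable [Group.IsSolvable G]

theorem IsSSPermutable.of_isCoatom {M : Subgroup G} (hM : IsCoatom M) : IsSSPermutable M := by
  obtain ⟨D, hD, hDM, hcomm⟩ := exists_normal_not_le_commutator_le hM.1
  refine ⟨D, by rw [← mul_normal, hM.2 _ (left_lt_sup.2 hDM), coe_top], fun p _ X => ?_⟩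
  let Y : Subgroup G := X.toSubgroup.map D.subtype
  change Permutes M Y
  by_cases hY : Y ≤ M
  · exact (Permutes.of_le hY).symm
  have hN : (⁅D, D⁆ ⊔ Y).Normal := commutator_sup_sylow_normal X
  have htop : M ⊔ (⁅D, D⁆ ⊔ Y) = ⊤ :=
    hM.2 _ (left_lt_sup.2 fun hle => hY (le_sup_right.trans hle))
  have hMY : (M : Set G) * (Y : Set G) = Set.univ :=
    calc (M : Set G) * Y = (M : Set G) * (⁅D, D⁆ : Subgroup G) * Y := by
          rw [← mul_normal M ⁅D, D⁆, sup_of_le_left hcomm]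
      _ = Set.univ := by rw [mul_assoc, ← normal_mul, ← mul_normal, htop, coe_top]
  exact (Permutes.of_forall_exists fun y _ m _ =>
    Set.mem_mul.1 (hMY ▸ Set.mem_univ (y * m))).symm

theorem IsSSTGroup.isSSPermutable (h : IsSSTGroup G) (H : Subgroup G) : IsSSPermutable H := by
  induction H using WellFoundedGT.induction with
  | ind H ih =>
    rcases eq_or_ne H ⊤ with rfl | hne
    · exact ⟨⊥, by simp, fun p _ X => (Permutes.of_le le_top).symm⟩
    obtain ⟨M, hHM⟩ := exists_covBy_of_wellFoundedLT (not_isMax_iff_ne_top.2 hne)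
    exact h H M hHM.le (.of_isCoatom (isCoatom_subgroupOf_of_covBy hHM)) (ih M hHM.lt)

end Transitivity

/-- Corollary 1.7. -/
theorem corollary17 {G : Type*} [Group G] [Finite G] (hsol : IsSolvable G) :
    List.TFAE
      [IsSSTGroup G,
       ∀ H : Subgroup G, IsSSPermutable H ∨ IsAbnormal H,
       ∀ H : Subgroup G, IsNSSPermutable H ∨ IsAbnormal H] := by
  have : Group.IsSolvable G := hsol
  tfae_have 1 → 2 := fun h H => .inl (h.isSSPermutable H)
  tfae_have 2 → 3 := fun h H => .inl (SSPermutableOrAbnormal.isNSSPermutable h H)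
  tfae_have 3 → 1 := fun h H _ _ _ _ =>
    have h' : SSPermutableOrAbnormal G := fun L => (h L).imp_left IsNSSPermutable.isSSPermutable
    (h'.isNSSPermutable H).isSSPermutable
  tfae_finish
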